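/- Let D₁ and D₂ be bounded domains in ℂ, let f : D₁ → D₂ be a proper holomorphic map, and let ν be a weight on D₂. Let u : D₂ → ℂ be measurable with ∫_{D₂} |u|² ν dA < ∞ and let v : D₁ → ℂ be measurable with ∫_{D₁} |v|² (ν∘f) dA < ∞. Define Λ₂v on the complement of the critical values of f by (Λ₂v)(w) = ∑_{z ∈ f⁻¹(w)} v(z)/f′(z) (the set of critical values has Lebesgue measure zero in D₂). Then ∫_{D₁} f′(z)·u(f(z))·conj(v(z))·ν(f(z)) dA(z) = ∫_{D₂} u(w)·conj((Λ₂v)(w))·ν(w) dA(w), both integrals being absolutely convergent. -/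

import Mathlib

/-!
Let `C` be the set of critical values of `f`, `Ω₂ = D₂ \ C` and `Ω₁ = D₁ ∩ f⁻¹(Ω₂)`. Properness
rules out constant `f`, so the zeros of `f'` and of each `f - w` are isolated in `D₁`. Hence `C` and
`D₁ \ Ω₁` are countable, thus null, and every fibre of `f` is finite.

*Bounded degree.* At `w ∈ Ω₂` the local inverses of `f` and properness show that the number of
points of the fibre is locally constant (`fibre_ncard_eventually_eq`). An open connected planar set
is not disconnected by a countable set, so this number is a constant `N` on `Ω₂`
(`constant_off_countable`).

*Change of variables.* `Ω₁` splits into countably many measurable pieces on which `f` is injective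
and has real Jacobian `|f'|²`. Summing the injective change of variables over the pieces gives
`∫_{Ω₁} |f'|² (g ∘ f) ≤ N ∫_{Ω₂} g` for `g ≥ 0` (`lintegral_comp_le`) and
`∫_{Ω₁} F = ∫_{Ω₂} ∑_{z ∈ f⁻¹(w)} F(z) / |f'(z)|² dA(w)` for integrable `F` (`area_formula`).

For `F = f' (u ∘ f) (conj v) (ν ∘ f)`, the elementary bound
`|F| ≤ |f'|² |u ∘ f|² (ν ∘ f) + |v|² (ν ∘ f)` and the first formula with `g = |u|² ν` give
integrability of `F`. Since `f' / |f'|² = 1 / conj f'`, the fibre sum in the second formula is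
`u (conj Λ₂v) ν`, which is the claim.
-/


open MeasureTheory Complex Metric

noncomputable section

/-- `ν` is a weight on `D`: measurable on `D`, positive on `D`, with `1/ν` locally
essentially bounded. -/
def IsWeight (D : Set ℂ) (ν : ℂ → ℝ) : Prop :=
  AEMeasurable ν (volume.restrict D) ∧ (∀ z ∈ D, 0 < ν z) ∧
    ∀ K : Set ℂ, K ⊆ D → IsCompact K → ∃ c > 0, ∀ᵐ z ∂(volume.restrict K), c ≤ ν z

open Set Filter Topology Function
open scoped ENNReal

/-! ### Zeros of analytic functions -/

theorem locally_finite_zeros {h : ℂ → ℂ} {U : Set ℂ} (hh : AnalyticOnNhd ℂ h U)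
    (hU : IsPreconnected U) (hne : ¬ EqOn h 0 U) :
    ∀ z ∈ U, ∃ t ∈ 𝓝 z, (t ∩ {x ∈ U | h x = 0}).Finite := by
  have h1 := (hh.eqOn_zero_or_eventually_ne_zero_of_preconnected hU).resolve_left hne
  have h2 := codiscreteWithin_iff_locallyFiniteComplementWithin.1 h1
  intro z hz
  obtain ⟨t, ht, hf⟩ := h2 z hz
  refine ⟨t, ht, hf.subset ?_⟩
  rintro x ⟨hx, hxU, hx0⟩
  exact ⟨hx, hxU, by simp [hx0]⟩

theorem countable_zeros {h : ℂ → ℂ} {U : Set ℂ} (hh : AnalyticOnNhd ℂ h U)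
    (hU : IsPreconnected U) (hne : ¬ EqOn h 0 U) : {x ∈ U | h x = 0}.Countable := by
  have h1 := locally_finite_zeros hh hU hne
  choose! t ht hf using h1
  obtain ⟨s, hsU, hs, hc⟩ := TopologicalSpace.countable_cover_nhdsWithin
    (f := t) (s := U) (fun x hx => mem_nhdsWithin_of_mem_nhds (ht x hx))
  refine (hs.biUnion fun x hx => (hf x (hsU hx)).countable).mono ?_
  intro x hx
  obtain ⟨y, hy, hxy⟩ := mem_iUnion₂.1 (hc hx.1)
  exact mem_iUnion₂.2 ⟨y, hy, hxy, hx⟩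

theorem finite_zeros {h : ℂ → ℂ} {U : Set ℂ} (hh : AnalyticOnNhd ℂ h U)
    (hU : IsPreconnected U) (hne : ¬ EqOn h 0 U) (hK : IsCompact {x ∈ U | h x = 0}) :
    {x ∈ U | h x = 0}.Finite := by
  have h1 := locally_finite_zeros hh hU hne
  choose! t ht hf using h1
  obtain ⟨s, hsU, hc⟩ := hK.elim_nhds_subcover t (fun x hx => ht x hx.1)
  refine (s.finite_toSet.biUnion fun x hx => hf x (hsU x hx).1).subset ?_
  intro x hx
  obtain ⟨y, hy, hxy⟩ := mem_iUnion₂.1 (hc hx)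
  exact mem_iUnion₂.2 ⟨y, hy, hxy, hx⟩

/-! ### Constancy of the number of preimages -/

/-- A locally constant function off a countable subset of a planar domain is constant. A ball minus
a countable set is connected, so near each point of `U` the function takes a single value; by
density of `Cᶜ` these values define a locally constant function on all of `U`. -/
theorem constant_off_countable {U C : Set ℂ} (hUo : IsOpen U) (hU : IsPreconnected U)
    (hC : C.Countable) (N : ℂ → ℕ)
    (hN : ∀ w ∈ U \ C, ∀ᶠ w' in 𝓝 w, w' ∈ U \ C → N w' = N w) :
    ∃ n, ∀ w ∈ U \ C, N w = n := by
  have hr : 1 < Module.rank ℝ ℂ := by simp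
  have hNc : ContinuousOn N (U \ C) := by
    intro w hw
    refine (tendsto_const_nhds (x := N w)).congr' ?_
    filter_upwards [mem_nhdsWithin_of_mem_nhds (hN w hw), self_mem_nhdsWithin] with x hx hx'
    exact (hx hx').symm
  have key : ∀ x ∈ U, ∃ r > 0, ∃ n, ball x r ⊆ U ∧ ∀ w ∈ ball x r \ C, N w = n := by
    intro x hx
    obtain ⟨r, hr0, hrU⟩ := Metric.isOpen_iff.1 hUo x hx
    -- The ball is homeomorphic to the plane, where complements of countable sets are connected.
    let e := OpenPartialHomeomorph.univBall x r
    have hinj : InjOn e univ := by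
      have := e.injOn
      rwa [OpenPartialHomeomorph.univBall_source] at this
    have himg : e '' univ = ball x r := by
      have := e.image_source_eq_target
      rwa [OpenPartialHomeomorph.univBall_source,
        OpenPartialHomeomorph.univBall_target x hr0] at this
    have hcon : IsConnected (e ⁻¹' C)ᶜ :=
      (hC.preimage_of_injOn (hinj.mono (subset_univ _))).isConnected_compl_of_one_lt_rank hr
    have hcon2 := hcon.isPreconnected.image e
      (OpenPartialHomeomorph.continuous_univBall x r).continuousOn
    have heq : e '' (e ⁻¹' C)ᶜ = ball x r \ C := by
      rw [← himg]; ext y; constructor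
      · rintro ⟨a, ha, rfl⟩; exact ⟨⟨a, trivial, rfl⟩, ha⟩
      · rintro ⟨⟨a, -, rfl⟩, ha⟩; exact ⟨a, ha, rfl⟩
    rw [heq] at hcon2
    obtain ⟨w₀, hw₀⟩ : (ball x r \ C).Nonempty := by
      rw [← heq]; exact hcon.nonempty.image e
    exact ⟨r, hr0, N w₀, hrU, fun w hw => hcon2.constant
      (hNc.mono (sdiff_subset_sdiff_left hrU)) hw hw₀⟩
  choose! r hr0 n hrU hn using key
  have hdense : Dense Cᶜ := hC.dense_compl ℝ
  have hnc : ContinuousOn n U := by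
    intro x hx
    refine (tendsto_const_nhds (x := n x)).congr' ?_
    filter_upwards [mem_nhdsWithin_of_mem_nhds (ball_mem_nhds x (hr0 x hx)),
      self_mem_nhdsWithin] with y hy hyU
    obtain ⟨w, hw, hwC⟩ := hdense.inter_open_nonempty (ball x (r x) ∩ ball y (r y))
      (isOpen_ball.inter isOpen_ball) ⟨y, hy, mem_ball_self (hr0 y hyU)⟩
    rw [← hn x hx w ⟨hw.1, hwC⟩, hn y hyU w ⟨hw.2, hwC⟩]
  rcases U.eq_empty_or_nonempty with rfl | ⟨x₀, hx₀⟩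
  · exact ⟨0, by simp⟩
  refine ⟨n x₀, fun w hw => ?_⟩
  rw [hn w hw.1 w ⟨mem_ball_self (hr0 w hw.1), hw.2⟩]
  exact hU.constant hnc hw.1 hx₀

/-- The inverse function theorem: near a noncritical point, `f` is injective and open. -/
theorem exists_injOn_nhd {f : ℂ → ℂ} {D : Set ℂ} (hD : IsOpen D) (hf : DifferentiableOn ℂ f D)
    {z : ℂ} (hz : z ∈ D) (hz' : deriv f z ≠ 0) :
    ∃ O, IsOpen O ∧ z ∈ O ∧ InjOn f O ∧ ∀ t ∈ 𝓝 z, f '' t ∈ 𝓝 (f z) := by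
  have hs : HasStrictDerivAt f (deriv f z) z :=
    (hf.analyticAt (hD.mem_nhds hz)).hasStrictDerivAt
  have hs' := hs.hasStrictFDerivAt_equiv hz'
  let e := hs'.toOpenPartialHomeomorph f
  refine ⟨e.source, e.open_source, hs'.mem_toOpenPartialHomeomorph_source, e.injOn, ?_⟩
  intro t ht
  rw [← hs'.map_nhds_eq_of_equiv]
  exact image_mem_map ht

/-- A proper map is closed: fibres near that of `w` stay in a given neighbourhood of the latter. -/
theorem fibre_subset_of_proper {f : ℂ → ℂ} {D₁ D₂ O : Set ℂ} (hD₂ : IsOpen D₂)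
    (hf : ContinuousOn f D₁)
    (hproper : ∀ K : Set ℂ, K ⊆ D₂ → IsCompact K → IsCompact (D₁ ∩ f ⁻¹' K))
    (hO : IsOpen O) {w : ℂ} (hw : w ∈ D₂) (hwO : D₁ ∩ f ⁻¹' {w} ⊆ O) :
    ∀ᶠ w' in 𝓝 w, D₁ ∩ f ⁻¹' {w'} ⊆ O := by
  obtain ⟨r, hr, hrD⟩ := Metric.nhds_basis_closedBall.mem_iff.1 (hD₂.mem_nhds hw)
  have hc := (hproper _ hrD (isCompact_closedBall w r)).diff hO
  have hc2 := hc.image_of_continuousOn (hf.mono (fun x hx => hx.1.1))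
  have hmem : (f '' ((D₁ ∩ f ⁻¹' closedBall w r) \ O))ᶜ ∈ 𝓝 w := by
    refine hc2.isClosed.isOpen_compl.mem_nhds ?_
    rintro ⟨x, hx, hxw⟩
    exact hx.2 (hwO ⟨hx.1.1, hxw⟩)
  filter_upwards [hmem, closedBall_mem_nhds w hr] with w' h1 h2
  rintro x ⟨hx, hxw⟩
  by_contra hxO
  exact h1 ⟨x, ⟨⟨hx, by rw [mem_preimage, show f x = w' from hxw]; exact h2⟩, hxO⟩, hxw⟩

/-- The number of preimages is locally constant at a noncritical value `w`: every nearby value has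
exactly one preimage close to each preimage of `w`, and by properness no others. -/
theorem fibre_ncard_eventually_eq {f : ℂ → ℂ} {D₁ D₂ : Set ℂ} (hD₁ : IsOpen D₁)
    (hD₂ : IsOpen D₂) (hf : DifferentiableOn ℂ f D₁)
    (hproper : ∀ K : Set ℂ, K ⊆ D₂ → IsCompact K → IsCompact (D₁ ∩ f ⁻¹' K))
    {w : ℂ} (hw : w ∈ D₂) (hfin : (D₁ ∩ f ⁻¹' {w}).Finite)
    (hreg : ∀ z ∈ D₁, f z = w → deriv f z ≠ 0) :
    ∀ᶠ w' in 𝓝 w, (D₁ ∩ f ⁻¹' {w'}).ncard = (D₁ ∩ f ⁻¹' {w}).ncard := by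
  set F := D₁ ∩ f ⁻¹' {w} with hF
  have h1 : ∀ z ∈ F, ∃ O, IsOpen O ∧ z ∈ O ∧ InjOn f O ∧ ∀ t ∈ 𝓝 z, f '' t ∈ 𝓝 (f z) :=
    fun z hz => exists_injOn_nhd hD₁ hf hz.1 (hreg z hz.1 hz.2)
  choose! O hOo hzO hOi hOim using h1
  obtain ⟨U, hU, hUd⟩ := hfin.t2_separation
  let P : ℂ → Set ℂ := fun z => D₁ ∩ (O z ∩ U z)
  have hPo : ∀ z ∈ F, IsOpen (P z) := fun z hz => hD₁.inter ((hOo z hz).inter (hU z).2)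
  have hzP : ∀ z ∈ F, z ∈ P z := fun z hz => ⟨hz.1, hzO z hz, (hU z).1⟩
  have h2 := fibre_subset_of_proper hD₂ hf.continuousOn hproper
    (isOpen_biUnion hPo) hw (fun z hz => mem_iUnion₂.2 ⟨z, hz, hzP z hz⟩)
  have h3 : ∀ᶠ w' in 𝓝 w, ∀ z ∈ F, w' ∈ f '' P z := by
    rw [hfin.eventually_all]
    intro z hz
    have := hOim z hz _ ((hPo z hz).mem_nhds (hzP z hz))
    rwa [show f z = w from hz.2] at this
  filter_upwards [h2, h3] with w' h2 h3
  choose! p hpP hpw using h3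
  have himg : p '' F = D₁ ∩ f ⁻¹' {w'} := by
    ext x; constructor
    · rintro ⟨z, hz, rfl⟩
      exact ⟨(hpP z hz).1, hpw z hz⟩
    · intro hx
      obtain ⟨z, hz, hxz⟩ := mem_iUnion₂.1 (h2 hx)
      exact ⟨z, hz, hOi z hz (hpP z hz).2.1 hxz.2.1 ((hpw z hz).trans hx.2.symm)⟩
  rw [← himg]
  refine InjOn.ncard_image ?_
  intro a ha b hb hab
  by_contra hne
  exact disjoint_left.1 (hUd ha hb hne) (hpP a ha).2.2 (hab ▸ (hpP b hb).2.2)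

/-! ### Change of variables for finite-to-one holomorphic maps -/

theorem exists_injOn_partition {f : ℂ → ℂ} {D Ω : Set ℂ} (hD : IsOpen D)
    (hf : DifferentiableOn ℂ f D) (hΩD : Ω ⊆ D) (hΩ : MeasurableSet Ω)
    (hreg : ∀ z ∈ Ω, deriv f z ≠ 0) :
    ∃ A : ℕ → Set ℂ, (∀ n, MeasurableSet (A n)) ∧ Pairwise (Disjoint on A) ∧
      (⋃ n, A n = Ω) ∧ ∀ n, InjOn f (A n) := by
  have h1 : ∀ z ∈ Ω, ∃ O, IsOpen O ∧ z ∈ O ∧ InjOn f O := fun z hz => by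
    obtain ⟨O, h1, h2, h3, -⟩ := exists_injOn_nhd hD hf (hΩD hz) (hreg z hz)
    exact ⟨O, h1, h2, h3⟩
  choose! O hOo hzO hOi using h1
  obtain ⟨s, hsΩ, hs, hc⟩ := TopologicalSpace.countable_cover_nhdsWithin
    (f := O) (s := Ω) (fun x hx => mem_nhdsWithin_of_mem_nhds ((hOo x hx).mem_nhds (hzO x hx)))
  obtain ⟨B, hB⟩ := ((hs.image O).insert ∅).exists_eq_range (insert_nonempty _ _)
  have hBp : ∀ n, IsOpen (B n) ∧ InjOn f (B n) := by
    intro n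
    have : B n ∈ insert ∅ (O '' s) := hB ▸ mem_range_self n
    rcases this with h | ⟨z, hz, h⟩
    · rw [h]; simp
    · rw [← h]; exact ⟨hOo z (hsΩ hz), hOi z (hsΩ hz)⟩
  refine ⟨fun n => disjointed B n ∩ Ω, fun n => ?_, ?_, ?_, fun n => ?_⟩
  · exact (MeasurableSet.disjointed (fun n => (hBp n).1.measurableSet) n).inter hΩ
  · intro i j hij
    exact (disjoint_disjointed B hij).mono inter_subset_left inter_subset_left
  · rw [← iUnion_inter, iUnion_disjointed, inter_eq_right]
    intro x hx
    obtain ⟨y, hy, hxy⟩ := mem_iUnion₂.1 (hc hx)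
    have : O y ∈ range B := hB ▸ mem_insert_of_mem _ ⟨y, hy, rfl⟩
    obtain ⟨n, hn⟩ := this
    exact mem_iUnion.2 ⟨n, hn ▸ hxy⟩
  · exact (hBp n).2.mono (inter_subset_left.trans (disjointed_subset B n))


/-- The derivative of `f` at `z` as an `ℝ`-linear map `ℂ → ℂ`, multiplication by `deriv f z`. -/
def realDeriv (f : ℂ → ℂ) (z : ℂ) : ℂ →L[ℝ] ℂ :=
  (ContinuousLinearMap.toSpanSingleton ℂ (deriv f z)).restrictScalars ℝ

theorem abs_det_realDeriv (f : ℂ → ℂ) (z : ℂ) : |(realDeriv f z).det| = ‖deriv f z‖ ^ 2 := by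
  have : (realDeriv f z).det = ‖deriv f z‖ ^ 2 := by
    simp [realDeriv, ContinuousLinearMap.det, LinearMap.det_restrictScalars,
      Algebra.norm_complex_eq, Complex.normSq_eq_norm_sq]
  rw [this, abs_of_nonneg (by positivity)]

theorem hasFDerivWithinAt_realDeriv {f : ℂ → ℂ} {D A : Set ℂ} (hD : IsOpen D)
    (hf : DifferentiableOn ℂ f D) {z : ℂ} (hz : z ∈ D) :
    HasFDerivWithinAt f (realDeriv f z) A z :=
  ((hf.differentiableAt (hD.mem_nhds hz)).hasDerivAt.hasFDerivAt.restrictScalars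
    ℝ).hasFDerivWithinAt

/-- A sum over the fibre of `w` is the sum of the contributions of the pieces `A n`, each of which
contains at most one point of the fibre. `invFunOn f (A n)` is the inverse of `f` on `A n`; its junk
values off `f '' A n` are discarded by the indicator. -/
theorem hasSum_fibre {M : Type*} [AddCommMonoid M] [TopologicalSpace M] [ContinuousAdd M]
    {f : ℂ → ℂ} {Ω : Set ℂ} {A : ℕ → Set ℂ} (hAd : Pairwise (Disjoint on A))
    (hAΩ : ⋃ n, A n = Ω) (hAi : ∀ n, InjOn f (A n)) {w : ℂ}
    (hfin : (Ω ∩ f ⁻¹' {w}).Finite) (G : ℂ → M) :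
    HasSum (fun n => (f '' A n).indicator (fun w => G (invFunOn f (A n) w)) w)
      (∑ z ∈ hfin.toFinset, G z) := by
  classical
  have h1 : ∀ z ∈ Ω, ∃ n, z ∈ A n := fun z hz => mem_iUnion.1 (hAΩ ▸ hz)
  choose! k hk using h1
  have hku : ∀ z ∈ Ω, ∀ n, z ∈ A n → n = k z := by
    intro z hz n hn
    by_contra hne
    exact disjoint_left.1 (hAd hne) hn (hk z hz)
  have h2 : HasSum (fun n => ∑ z ∈ hfin.toFinset, if n = k z then G z else 0)
      (∑ z ∈ hfin.toFinset, G z) :=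
    hasSum_sum fun z _ => hasSum_ite_eq (k z) (G z)
  convert h2 using 2 with n
  by_cases hw : w ∈ f '' A n
  · rw [indicator_of_mem hw]
    have hmem : invFunOn f (A n) w ∈ A n := invFunOn_mem hw
    have heq : f (invFunOn f (A n) w) = w := invFunOn_eq hw
    have hΩ : invFunOn f (A n) w ∈ Ω := by
      rw [← hAΩ]; exact mem_iUnion.2 ⟨n, hmem⟩
    rw [Finset.sum_eq_single (invFunOn f (A n) w), if_pos (hku _ hΩ n hmem)]
    · intro z hz hne
      rw [Finite.mem_toFinset] at hz
      rw [if_neg]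
      rintro rfl
      exact hne (hAi _ (hk z hz.1) hmem (hz.2.trans heq.symm))
    · intro h
      exact absurd (hfin.mem_toFinset.2 ⟨hΩ, heq⟩) h
  · rw [indicator_of_notMem hw, Finset.sum_eq_zero]
    intro z hz
    rw [Finite.mem_toFinset] at hz
    rw [if_neg]
    rintro rfl
    exact hw ⟨z, hk z hz.1, hz.2⟩

/-- The area formula for functions pulled back by `f`, with multiplicity bounded by `N`. -/
theorem lintegral_comp_le {f : ℂ → ℂ} {D Ω₁ Ω₂ : Set ℂ} (hD : IsOpen D)
    (hf : DifferentiableOn ℂ f D) (hΩD : Ω₁ ⊆ D) (hΩ : MeasurableSet Ω₁)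
    (hΩ₂ : MeasurableSet Ω₂)
    (hreg : ∀ z ∈ Ω₁, deriv f z ≠ 0) (hmaps : MapsTo f Ω₁ Ω₂)
    (hfin : ∀ w ∈ Ω₂, (Ω₁ ∩ f ⁻¹' {w}).Finite) {N : ℕ}
    (hN : ∀ w ∈ Ω₂, (Ω₁ ∩ f ⁻¹' {w}).ncard ≤ N) {g : ℂ → ℝ≥0∞}
    (hg : AEMeasurable g (volume.restrict Ω₂)) :
    ∫⁻ z in Ω₁, ENNReal.ofReal (‖deriv f z‖ ^ 2) * g (f z) ≤ N * ∫⁻ w in Ω₂, g w := by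
  obtain ⟨A, hAm, hAd, hAΩ, hAi⟩ := exists_injOn_partition hD hf hΩD hΩ hreg
  have hAsub : ∀ n, A n ⊆ Ω₁ := fun n => hAΩ ▸ subset_iUnion A n
  have hder : ∀ n, ∀ z ∈ A n, HasFDerivWithinAt f (realDeriv f z) (A n) z :=
    fun n z hz => hasFDerivWithinAt_realDeriv hD hf (hΩD (hAsub n hz))
  have himm : ∀ n, MeasurableSet (f '' A n) := fun n =>
    measurable_image_of_fderivWithin (hAm n) (hder n) (hAi n)
  have himsub : ∀ n, f '' A n ⊆ Ω₂ := fun n => (hmaps.mono_left (hAsub n)).image_subset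
  conv_lhs => rw [← hAΩ]
  rw [lintegral_iUnion hAm hAd]
  have h1 : ∀ n, ∫⁻ z in A n, ENNReal.ofReal (‖deriv f z‖ ^ 2) * g (f z)
      = ∫⁻ w in Ω₂, (f '' A n).indicator g w := by
    intro n
    rw [lintegral_indicator (himm n), Measure.restrict_restrict (himm n),
      inter_eq_left.2 (himsub n),
      lintegral_image_eq_lintegral_abs_det_fderiv_mul volume (hAm n) (hder n) (hAi n)]
    simp only [abs_det_realDeriv]
  simp_rw [h1]
  rw [← lintegral_tsum fun n => hg.indicator (himm n), ← lintegral_const_mul'' _ hg]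
  refine setLIntegral_mono_ae' hΩ₂ (ae_of_all _ fun w hw => ?_)
  have h2 := (hasSum_fibre hAd hAΩ hAi (hfin w hw) (fun _ => g w)).tsum_eq
  have h3 : ∀ n, (f '' A n).indicator g w = (f '' A n).indicator (fun _ => g w) w := by
    intro n; by_cases h : w ∈ f '' A n <;> simp [h]
  simp_rw [h3]
  refine h2.le.trans ?_
  rw [Finset.sum_const, nsmul_eq_mul, ← ncard_eq_toFinset_card _ (hfin w hw)]
  gcongr
  exact hN w hw

/-- The area formula with `H` the sum of `F / |f'|²` over the fibres of `f`. -/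
theorem area_formula {f : ℂ → ℂ} {D Ω₁ Ω₂ : Set ℂ} (hD : IsOpen D)
    (hf : DifferentiableOn ℂ f D) (hΩD : Ω₁ ⊆ D) (hΩ : MeasurableSet Ω₁)
    (hΩ₂ : MeasurableSet Ω₂)
    (hreg : ∀ z ∈ Ω₁, deriv f z ≠ 0) (hmaps : MapsTo f Ω₁ Ω₂)
    (hfin : ∀ w ∈ Ω₂, (Ω₁ ∩ f ⁻¹' {w}).Finite) {F H : ℂ → ℂ} (hF : IntegrableOn F Ω₁)
    (hH : ∀ w (hw : w ∈ Ω₂),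
      H w = ∑ z ∈ (hfin w hw).toFinset, (‖deriv f z‖ ^ 2)⁻¹ • F z) :
    IntegrableOn H Ω₂ ∧ ∫ z in Ω₁, F z = ∫ w in Ω₂, H w := by
  obtain ⟨A, hAm, hAd, hAΩ, hAi⟩ := exists_injOn_partition hD hf hΩD hΩ hreg
  have hAsub : ∀ n, A n ⊆ Ω₁ := fun n => hAΩ ▸ subset_iUnion A n
  have hder : ∀ n, ∀ z ∈ A n, HasFDerivWithinAt f (realDeriv f z) (A n) z :=
    fun n z hz => hasFDerivWithinAt_realDeriv hD hf (hΩD (hAsub n hz))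
  have himm : ∀ n, MeasurableSet (f '' A n) := fun n =>
    measurable_image_of_fderivWithin (hAm n) (hder n) (hAi n)
  have himsub : ∀ n, f '' A n ⊆ Ω₂ := fun n => (hmaps.mono_left (hAsub n)).image_subset
  set G : ℂ → ℂ := fun z => (‖deriv f z‖ ^ 2)⁻¹ • F z with hG
  set g : ℕ → ℂ → ℂ := fun n w => G (invFunOn f (A n) w) with hg
  have hgf : ∀ n, ∀ z ∈ A n, |(realDeriv f z).det| • g n (f z) = F z := by
    intro n z hz
    have h0 : ‖deriv f z‖ ^ 2 ≠ 0 :=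
      pow_ne_zero _ (norm_ne_zero_iff.2 (hreg z (hAsub n hz)))
    simp only [hg, hG, (hAi n).leftInvOn_invFunOn hz, abs_det_realDeriv]
    exact smul_inv_smul₀ h0 _
  have hFn : ∀ n, IntegrableOn F (A n) := fun n => hF.mono_set (hAsub n)
  have hgn : ∀ n, IntegrableOn (g n) (f '' A n) := by
    intro n
    rw [integrableOn_image_iff_integrableOn_abs_det_fderiv_smul volume (hAm n) (hder n) (hAi n)]
    exact (hFn n).congr_fun (fun z hz => (hgf n z hz).symm) (hAm n)
  have hint : ∀ n, ∫ w in f '' A n, g n w = ∫ z in A n, F z := by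
    intro n
    rw [integral_image_eq_integral_abs_det_fderiv_smul volume (hAm n) (hder n) (hAi n)]
    exact setIntegral_congr_fun (hAm n) (hgf n)
  have hlint : ∀ n, ∫⁻ w in f '' A n, ‖g n w‖ₑ = ∫⁻ z in A n, ‖F z‖ₑ := by
    intro n
    rw [lintegral_image_eq_lintegral_abs_det_fderiv_mul volume (hAm n) (hder n) (hAi n)]
    refine setLIntegral_congr_fun (hAm n) fun z hz => ?_
    rw [← hgf n z hz, enorm_smul |(realDeriv f z).det| (g n (f z)),
      Real.enorm_eq_ofReal (abs_nonneg _)]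
  -- `q n` is the contribution to `H` of the points of the fibre lying in `A n`.
  let q : ℕ → ℂ → ℂ := fun n => (f '' A n).indicator (g n)
  have hres : ∀ n, (volume.restrict Ω₂).restrict (f '' A n) = volume.restrict (f '' A n) := by
    intro n
    rw [Measure.restrict_restrict (himm n), inter_eq_left.2 (himsub n)]
  have hqm : ∀ n, AEStronglyMeasurable (q n) (volume.restrict Ω₂) := by
    intro n
    rw [aestronglyMeasurable_indicator_iff (himm n), hres]
    exact (hgn n).1
  have hqe : ∀ n w, ‖q n w‖ₑ = (f '' A n).indicator (fun w => ‖g n w‖ₑ) w := by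
    intro n w
    exact enorm_indicator_eq_indicator_enorm _ _
  have hqi : ∀ n, ∫ w in Ω₂, q n w = ∫ z in A n, F z := by
    intro n
    rw [integral_indicator (himm n), hres, hint]
  have hqs : ∑' n, ∫⁻ w in Ω₂, ‖q n w‖ₑ = ∫⁻ z in Ω₁, ‖F z‖ₑ := by
    conv_rhs => rw [← hAΩ]
    rw [lintegral_iUnion hAm hAd]
    refine tsum_congr fun n => ?_
    simp_rw [hqe]
    rw [lintegral_indicator (himm n), hres, hlint]
  have hqfin : ∑' n, ∫⁻ w in Ω₂, ‖q n w‖ₑ ≠ ∞ := hqs ▸ hF.2.ne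
  have hHq : ∀ w ∈ Ω₂, HasSum (fun n => q n w) (H w) := by
    intro w hw
    rw [hH w hw]
    exact hasSum_fibre hAd hAΩ hAi (hfin w hw) G
  have hHae : ∀ᵐ w ∂volume.restrict Ω₂, HasSum (fun n => q n w) (H w) :=
    (ae_restrict_iff' hΩ₂).2 (ae_of_all _ hHq)
  have hHm : AEStronglyMeasurable H (volume.restrict Ω₂) :=
    aestronglyMeasurable_of_tendsto_ae atTop
      (f := fun s w => ∑ n ∈ Finset.range s, q n w)
      (fun s => Finset.aestronglyMeasurable_fun_sum _ fun n _ => hqm n)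
      (hHae.mono fun w hw => hw.tendsto_sum_nat)
  refine ⟨⟨hHm, ?_⟩, ?_⟩
  · refine lt_of_le_of_lt ?_ hqfin.lt_top
    rw [← lintegral_tsum fun n => (hqm n).enorm]
    refine lintegral_mono_ae (hHae.mono fun w hw => ?_)
    rw [← hw.tsum_eq]
    exact enorm_tsum_le_tsum_enorm
  · have h1 : ∫ w in Ω₂, H w = ∫ w in Ω₂, ∑' n, q n w :=
      integral_congr_ae (hHae.mono fun w hw => hw.tsum_eq.symm)
    rw [h1, integral_tsum hqm hqfin]
    simp_rw [hqi]
    rw [← hAΩ] at hF ⊢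
    exact (hasSum_integral_iUnion hAm hAd hF).tsum_eq.symm

/-- Preimages of null sets under `f` are null in `Ω₁`. This makes `u ∘ f` and `ν ∘ f`
almost everywhere measurable when `u` and `ν` are. -/
theorem map_restrict_absolutelyContinuous {f : ℂ → ℂ} {D Ω₁ Ω₂ : Set ℂ} (hD : IsOpen D)
    (hf : DifferentiableOn ℂ f D) (hΩD : Ω₁ ⊆ D) (hΩ : MeasurableSet Ω₁)
    (hΩ₂ : MeasurableSet Ω₂)
    (hreg : ∀ z ∈ Ω₁, deriv f z ≠ 0) (hmaps : MapsTo f Ω₁ Ω₂)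
    (hfin : ∀ w ∈ Ω₂, (Ω₁ ∩ f ⁻¹' {w}).Finite) {N : ℕ}
    (hN : ∀ w ∈ Ω₂, (Ω₁ ∩ f ⁻¹' {w}).ncard ≤ N) :
    (volume.restrict Ω₁).map f ≪ volume.restrict Ω₂ := by
  have hfm : AEMeasurable f (volume.restrict Ω₁) :=
    (hf.continuousOn.mono hΩD).aemeasurable hΩ
  refine Measure.AbsolutelyContinuous.mk fun S hS hS0 => ?_
  rw [Measure.map_apply_of_aemeasurable hfm hS]
  have h1 := lintegral_comp_le hD hf hΩD hΩ hΩ₂ hreg hmaps hfin hN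
    (g := S.indicator 1) (aemeasurable_one.indicator hS)
  rw [lintegral_indicator_one hS, hS0, mul_zero, nonpos_iff_eq_zero, lintegral_eq_zero_iff'] at h1
  · have h2 : ∀ᵐ z ∂volume.restrict Ω₁, z ∉ f ⁻¹' S := by
      filter_upwards [h1, ae_restrict_mem hΩ] with z hz hzΩ hzS
      have h3 : 0 < ‖deriv f z‖ ^ 2 := by
        have := norm_pos_iff.2 (hreg z hzΩ)
        positivity
      have h4 : f z ∈ S := hzS
      simp [h4] at hz
      exact hreg z hzΩ hz
    exact measure_eq_zero_iff_ae_notMem.2 h2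
  · have hd : AEMeasurable (deriv f) (volume.restrict Ω₁) := (measurable_deriv f).aemeasurable
    refine (hd.norm.pow_const 2).ennreal_ofReal.mul ?_
    exact ((measurable_one.indicator hS).comp_aemeasurable hfm)

/-! ### The adjoint identity -/

/-- The adjoint identity `⟨Λ₁ u, v⟩_{ν∘f} = ⟨u, Λ₂ v⟩_ν` for a proper holomorphic map
`f : D₁ → D₂`, where `Λ₁ u = f'·(u ∘ f)` and `(Λ₂ v)(w) = ∑_{z ∈ f⁻¹(w)} v(z)/f'(z)`. -/
theorem adjoint_identity (D₁ D₂ : Set ℂ)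
    (hD₁o : IsOpen D₁) (hD₁c : IsConnected D₁) (hD₁b : Bornology.IsBounded D₁)
    (hD₂o : IsOpen D₂) (hD₂c : IsConnected D₂) (hD₂b : Bornology.IsBounded D₂)
    (f : ℂ → ℂ) (hf : DifferentiableOn ℂ f D₁) (hmaps : Set.MapsTo f D₁ D₂)
    (hproper : ∀ K : Set ℂ, K ⊆ D₂ → IsCompact K → IsCompact (D₁ ∩ f ⁻¹' K))
    (ν : ℂ → ℝ) (hν : IsWeight D₂ ν)
    (u : ℂ → ℂ) (hu_meas : AEMeasurable u (volume.restrict D₂))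
    (hu_int : IntegrableOn (fun w => ‖u w‖ ^ 2 * ν w) D₂ volume)
    (v : ℂ → ℂ) (hv_meas : AEMeasurable v (volume.restrict D₁))
    (hv_int : IntegrableOn (fun z => ‖v z‖ ^ 2 * ν (f z)) D₁ volume)
    (Λ₂v : ℂ → ℂ)
    (hΛ₂v : ∀ w ∈ D₂, (∀ z ∈ D₁, f z = w → deriv f z ≠ 0) →
      Λ₂v w = ∑ᶠ z ∈ D₁ ∩ f ⁻¹' {w}, v z / deriv f z) :
    IntegrableOn (fun z => deriv f z * u (f z) * (starRingEnd ℂ) (v z) * (ν (f z) : ℂ))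
        D₁ volume ∧
      IntegrableOn (fun w => u w * (starRingEnd ℂ) (Λ₂v w) * (ν w : ℂ)) D₂ volume ∧
      ∫ z in D₁, deriv f z * u (f z) * (starRingEnd ℂ) (v z) * (ν (f z) : ℂ) =
        ∫ w in D₂, u w * (starRingEnd ℂ) (Λ₂v w) * (ν w : ℂ) := by
  have hD₁p := hD₁c.isPreconnected
  have hfan : AnalyticOnNhd ℂ f D₁ := hf.analyticOnNhd hD₁o
  -- Otherwise `D₁` would be the compact preimage of a point, but nonempty open sets in `ℂ` are not
  -- compact.
  have hnonconst : ∀ w, ¬ ∀ z ∈ D₁, f z = w := by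
    intro w hw
    obtain ⟨z₀, hz₀⟩ := hD₁c.nonempty
    have hK := hproper {w} (by
      rintro x rfl
      rw [← hw z₀ hz₀]; exact hmaps hz₀) isCompact_singleton
    have heq : D₁ ∩ f ⁻¹' {w} = D₁ := inter_eq_left.2 fun z hz => hw z hz
    rw [heq] at hK
    rcases isClopen_iff.1 ⟨hK.isClosed, hD₁o⟩ with h | h
    · exact hD₁c.nonempty.ne_empty h
    · exact noncompact_univ ℂ (h ▸ hK)
  have hfibeq : ∀ w, D₁ ∩ f ⁻¹' {w} = {z ∈ D₁ | f z - w = 0} := by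
    intro w; ext z; simp [sub_eq_zero]
  have hsub : ∀ w, AnalyticOnNhd ℂ (fun z => f z - w) D₁ := fun w =>
    hfan.sub analyticOnNhd_const
  have hsub0 : ∀ w, ¬ EqOn (fun z => f z - w) 0 D₁ := fun w h =>
    hnonconst w fun z hz => sub_eq_zero.1 (h hz)
  have hfin₀ : ∀ w ∈ D₂, (D₁ ∩ f ⁻¹' {w}).Finite := by
    intro w hw
    have hK := hproper {w} (singleton_subset_iff.2 hw) isCompact_singleton
    rw [hfibeq] at hK ⊢
    exact finite_zeros (hsub w) hD₁p (hsub0 w) hK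
  have hZc : {z ∈ D₁ | deriv f z = 0}.Countable := by
    refine countable_zeros hfan.deriv hD₁p fun h => ?_
    obtain ⟨a, ha⟩ := hD₁o.exists_is_const_of_deriv_eq_zero hD₁p hf h
    exact hnonconst a ha
  set C : Set ℂ := f '' {z ∈ D₁ | deriv f z = 0} with hC
  have hCc : C.Countable := hZc.image f
  set Ω₂ : Set ℂ := D₂ \ C with hΩ₂
  set Ω₁ : Set ℂ := D₁ \ (⋃ w ∈ C, D₁ ∩ f ⁻¹' {w}) with hΩ₁
  have hEc : (⋃ w ∈ C, D₁ ∩ f ⁻¹' {w}).Countable := hCc.biUnion fun w _ => by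
    rw [hfibeq]; exact countable_zeros (hsub w) hD₁p (hsub0 w)
  have hmem₁ : ∀ z, z ∈ Ω₁ ↔ z ∈ D₁ ∧ f z ∉ C := by
    intro z
    simp only [hΩ₁, Set.mem_sdiff, mem_iUnion, mem_inter_iff, mem_preimage, mem_singleton_iff]
    constructor
    · rintro ⟨h1, h2⟩
      exact ⟨h1, fun h3 => h2 ⟨f z, h3, h1, rfl⟩⟩
    · rintro ⟨h1, h2⟩
      refine ⟨h1, ?_⟩
      rintro ⟨w, hw, -, rfl⟩
      exact h2 hw
  have hΩ₁m : MeasurableSet Ω₁ := hD₁o.measurableSet.diff hEc.measurableSet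
  have hΩ₂m : MeasurableSet Ω₂ := hD₂o.measurableSet.diff hCc.measurableSet
  have hr₁ : volume.restrict D₁ = volume.restrict Ω₁ :=
    Measure.restrict_congr_set (sdiff_null_ae_eq_self (hEc.measure_zero _)).symm
  have hr₂ : volume.restrict D₂ = volume.restrict Ω₂ :=
    Measure.restrict_congr_set (sdiff_null_ae_eq_self (hCc.measure_zero _)).symm
  have hΩ₁D : Ω₁ ⊆ D₁ := sdiff_subset
  have hregD : ∀ w ∈ Ω₂, ∀ z ∈ D₁, f z = w → deriv f z ≠ 0 := fun w hw z hz hzw h0 =>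
    hw.2 ⟨z, ⟨hz, h0⟩, hzw⟩
  have hreg : ∀ z ∈ Ω₁, deriv f z ≠ 0 := fun z hz h0 =>
    ((hmem₁ z).1 hz).2 ⟨z, ⟨hz.1, h0⟩, rfl⟩
  have hmapsΩ : MapsTo f Ω₁ Ω₂ := fun z hz => ⟨hmaps hz.1, ((hmem₁ z).1 hz).2⟩
  have hfibΩ : ∀ w ∈ Ω₂, Ω₁ ∩ f ⁻¹' {w} = D₁ ∩ f ⁻¹' {w} := by
    intro w hw; ext z
    refine ⟨fun h => ⟨h.1.1, h.2⟩, fun h => ⟨(hmem₁ z).2 ⟨h.1, ?_⟩, h.2⟩⟩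
    rw [show f z = w from h.2]; exact hw.2
  have hfin : ∀ w ∈ Ω₂, (Ω₁ ∩ f ⁻¹' {w}).Finite := fun w hw => by
    rw [hfibΩ w hw]; exact hfin₀ w hw.1
  obtain ⟨N, hN₀⟩ := constant_off_countable hD₂o hD₂c.isPreconnected hCc
    (fun w => (D₁ ∩ f ⁻¹' {w}).ncard) (fun w hw =>
      (fibre_ncard_eventually_eq hD₁o hD₂o hf hproper hw.1 (hfin₀ w hw.1) (hregD w hw)).mono
        fun _ h _ => h)
  have hN : ∀ w ∈ Ω₂, (Ω₁ ∩ f ⁻¹' {w}).ncard ≤ N := fun w hw => by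
    rw [hfibΩ w hw]; exact (hN₀ w hw).le
  obtain ⟨hνm, hνpos, -⟩ := hν
  rw [IntegrableOn] at hu_int hv_int
  simp only [IntegrableOn]
  rw [hr₁] at hv_meas hv_int ⊢
  rw [hr₂] at hu_meas hu_int hνm ⊢
  have hac := map_restrict_absolutelyContinuous hD₁o hf hΩ₁D hΩ₁m hΩ₂m hreg hmapsΩ hfin hN
  have hfm : AEMeasurable f (volume.restrict Ω₁) :=
    (hf.continuousOn.mono hΩ₁D).aemeasurable hΩ₁m
  have hdm : AEMeasurable (deriv f) (volume.restrict Ω₁) := (measurable_deriv f).aemeasurable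
  have hufm : AEMeasurable (fun z => u (f z)) (volume.restrict Ω₁) :=
    (hu_meas.mono_ac hac).comp_aemeasurable hfm
  have hνfm : AEMeasurable (fun z => ν (f z)) (volume.restrict Ω₁) :=
    (hνm.mono_ac hac).comp_aemeasurable hfm
  have hP : Integrable (fun z => ‖deriv f z‖ ^ 2 * (‖u (f z)‖ ^ 2 * ν (f z)))
      (volume.restrict Ω₁) := by
    refine ⟨((hdm.norm.pow_const 2).mul
      ((hufm.norm.pow_const 2).mul hνfm)).aestronglyMeasurable, ?_⟩
    have h1 := lintegral_comp_le hD₁o hf hΩ₁D hΩ₁m hΩ₂m hreg hmapsΩ hfin hN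
      (g := fun w => ‖‖u w‖ ^ 2 * ν w‖ₑ) hu_int.1.enorm
    refine lt_of_le_of_lt (le_of_eq ?_) (h1.trans_lt
      (ENNReal.mul_lt_top (ENNReal.natCast_lt_top N) hu_int.2))
    refine lintegral_congr fun z => ?_
    rw [enorm_mul, Real.enorm_eq_ofReal (by positivity : (0:ℝ) ≤ ‖deriv f z‖ ^ 2)]
  have hF : Integrable
      (fun z => deriv f z * u (f z) * (starRingEnd ℂ) (v z) * (ν (f z) : ℂ))
      (volume.restrict Ω₁) := by
    refine (hP.add hv_int).mono' ?_ ?_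
    · exact (((hdm.mul hufm).mul
        (Complex.continuous_conj.measurable.comp_aemeasurable hv_meas)).mul
        (Complex.measurable_ofReal.comp_aemeasurable hνfm)).aestronglyMeasurable
    · filter_upwards [ae_restrict_mem hΩ₁m] with z hz
      have hpos := hνpos _ (hmaps hz.1)
      simp only [norm_mul, RCLike.norm_conj, Complex.norm_real, Pi.add_apply,
        Real.norm_of_nonneg hpos.le]
      have h2 : ‖deriv f z‖ * ‖u (f z)‖ * ‖v z‖
          ≤ (‖deriv f z‖ * ‖u (f z)‖) ^ 2 + ‖v z‖ ^ 2 := by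
        nlinarith [sq_nonneg (‖deriv f z‖ * ‖u (f z)‖ - ‖v z‖),
          sq_nonneg (‖deriv f z‖ * ‖u (f z)‖), sq_nonneg ‖v z‖]
      calc _ ≤ ((‖deriv f z‖ * ‖u (f z)‖) ^ 2 + ‖v z‖ ^ 2) * ν (f z) := by gcongr
        _ = _ := by ring
  refine ⟨hF, area_formula hD₁o hf hΩ₁D hΩ₁m hΩ₂m hreg hmapsΩ hfin hF fun w hw => ?_⟩
  have hΛ : Λ₂v w = ∑ z ∈ (hfin w hw).toFinset, v z / deriv f z := by
    rw [hΛ₂v w hw.1 (hregD w hw), ← hfibΩ w hw]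
    exact finsum_mem_eq_finite_toFinset_sum _ _
  rw [hΛ, map_sum, Finset.mul_sum, Finset.sum_mul]
  refine Finset.sum_congr rfl fun z hz => ?_
  rw [Finite.mem_toFinset] at hz
  have hd : deriv f z ≠ 0 := hreg z hz.1
  have hcd : (starRingEnd ℂ) (deriv f z) ≠ 0 := by simpa using hd
  rw [show f z = w from hz.2, Complex.real_smul, map_div₀]
  -- The identity `‖f'‖² = f' * conj f'` turns `f' / ‖f'‖²` into `1 / conj f'`
  rw [Complex.ofReal_inv, Complex.ofReal_pow, ← Complex.mul_conj']
  field_simp
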